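/- arXiv:1605.04573 — 2 statements merged into one kernel-verified Lean document; each statement's English description precedes it below -/
import Mathlib

section
/- Let G be a real symmetric 4×4 matrix of the form G = -(1/c²) e₀ e₀ᵀ + Σ_{i=1}^{3} eᵢ eᵢᵀ for a basis e₀,…,e₃ with dual basis e₀',…,e₃'. Set W := {z : ⟪e₀', z⟫ = 0}. Then for every nonzero z ∈ W one has z ⬝ (G⁻¹ z) > 0; that is, G⁻¹ is positive definite on the hyperplane W. -/
open Matrix

theorem sum_smul_vecMulVec_eq_transpose_mul_diagonal_mul {n R : Type*} [Fintype n] [DecidableEq n]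
    [CommRing R] (d : n → R) (e : n → n → R) :
    ∑ k, d k • vecMulVec (e k) (e k) = (of e)ᵀ * diagonal d * of e := by
  ext i j
  rw [Matrix.sum_apply, Matrix.mul_apply]
  simp only [Matrix.smul_apply, vecMulVec_apply, smul_eq_mul, mul_diagonal, transpose_apply,
    of_apply]
  exact Finset.sum_congr rfl fun k _ => by ring

theorem of_mul_transpose_of_eq_one {n R : Type*} [Fintype n] [DecidableEq n] [CommRing R]
    {e e' : n → n → R} (hdual : ∀ k l, e' k ⬝ᵥ e l = if k = l then (1 : R) else 0) :
    of e' * (of e)ᵀ = 1 := by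
  ext k l
  exact (hdual k l).trans one_apply.symm

/-- A quadratic form that is diagonal in the basis `e` has an inverse that is diagonal in the
dual basis `e'`. -/
theorem dotProduct_inv_sum_smul_vecMulVec_mulVec {n K : Type*} [Fintype n] [DecidableEq n]
    [Field K] {d : n → K} (hd : ∀ k, d k ≠ 0) {e e' : n → n → K}
    (hdual : ∀ k l, e' k ⬝ᵥ e l = if k = l then (1 : K) else 0) (z : n → K) :
    z ⬝ᵥ (∑ k, d k • vecMulVec (e k) (e k))⁻¹ *ᵥ z = ∑ k, (d k)⁻¹ * (e' k ⬝ᵥ z) ^ 2 := by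
  have hFE := of_mul_transpose_of_eq_one hdual
  have hEF : of e * (of e')ᵀ = 1 := by
    simpa using congrArg transpose hFE
  have hD : diagonal d * diagonal (fun k => (d k)⁻¹) = 1 := by
    simp [diagonal_mul_diagonal, hd]
  have hinv : (∑ k, d k • vecMulVec (e k) (e k))⁻¹ =
      (of e')ᵀ * diagonal (fun k => (d k)⁻¹) * of e' := by
    apply inv_eq_right_inv
    rw [sum_smul_vecMulVec_eq_transpose_mul_diagonal_mul]
    calc _ = (of e)ᵀ * (diagonal d * (of e * (of e')ᵀ) * diagonal (fun k => (d k)⁻¹)) * of e' := by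
          simp only [Matrix.mul_assoc]
      _ = 1 := by rw [hEF, Matrix.mul_one, hD, Matrix.mul_one, mul_eq_one_comm.mp hFE]
  rw [hinv, ← mulVec_mulVec, ← mulVec_mulVec, dotProduct_mulVec, vecMul_transpose]
  simp only [dotProduct, mulVec_diagonal]
  exact Finset.sum_congr rfl fun k _ => by simp only [mulVec, of_apply, dotProduct]; ring

theorem exists_dual_dotProduct_ne_zero {n K : Type*} [Fintype n] [DecidableEq n] [Field K]
    {e e' : n → n → K} (hdual : ∀ k l, e' k ⬝ᵥ e l = if k = l then (1 : K) else 0)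
    {z : n → K} (hz : z ≠ 0) : ∃ k, e' k ⬝ᵥ z ≠ 0 := by
  by_contra! h
  have hFE := of_mul_transpose_of_eq_one hdual
  have hFz : of e' *ᵥ z = 0 := funext h
  apply hz
  rw [← one_mulVec z, ← mul_eq_one_comm.mp hFE, ← mulVec_mulVec, hFz, mulVec_zero]

theorem stmt3 (c : ℝ) (hc : 0 < c)
    (e e' : Fin 4 → Fin 4 → ℝ)
    (hbasis : LinearIndependent ℝ e)
    (hdual : ∀ k l, e' k ⬝ᵥ e l = if k = l then (1 : ℝ) else 0)
    (G : Matrix (Fin 4) (Fin 4) ℝ)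
    (hGrep : G = ∑ k : Fin 4,
      (if k = 0 then -(1 / c ^ 2) else 1) • vecMulVec (e k) (e k)) :
    ∀ z : Fin 4 → ℝ, e' 0 ⬝ᵥ z = 0 → z ≠ 0 →
      0 < z ⬝ᵥ G⁻¹.mulVec z := by
  intro z hz0 hz
  have hd (k : Fin 4) : (if k = 0 then -(1 / c ^ 2) else 1 : ℝ) ≠ 0 := by
    split_ifs
    · exact neg_ne_zero.mpr (by positivity)
    · exact one_ne_zero
  rw [hGrep, dotProduct_inv_sum_smul_vecMulVec_mulVec hd hdual]
  obtain ⟨k, hk⟩ := exists_dual_dotProduct_ne_zero hdual hz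
  refine Finset.sum_pos' (fun i _ => ?_) ⟨k, Finset.mem_univ k, ?_⟩
  · by_cases hi : i = 0
    · simp [hi, hz0]
    · simpa [hi] using sq_nonneg (e' i ⬝ᵥ z)
  · have hk0 : k ≠ 0 := fun h => hk (h ▸ hz0)
    simpa [hk0] using pow_pos (abs_pos.mpr hk) 2
end

section
/- Let c > 0, V ∈ ℝ³ with |V| < c, Q ∈ SO(3), and let Y : ℝ⁴ → ℝ⁴ be the Lorentz transformation Y(t*, x*) = (γt* + (γ/c²) V ⬝ (Qx*), γt*V + B_c(V)Qx*). Suppose s ↦ (t*(s), ξ*(s)) is a C¹ curve, and (t(s), ξ(s)) := Y(t*(s), ξ*(s)); write u* := dξ*/ds / (dt*/ds) and u := dξ/ds / (dt/ds). If 1 + (V ⬝ Q u*)/c² > 0 then u = (V + (1/γ) B_c(V) Q u*) / (1 + (V ⬝ Q u*)/c²). In particular, if Q = Id and V is parallel to u*, then u = (V + u*)/(1 + (V ⬝ u*)/c²) (relativistic addition of velocities). -/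
open Matrix

noncomputable def gammaV (c : ℝ) (V : Fin 3 → ℝ) : ℝ :=
  1 / Real.sqrt (1 - (∑ i, V i ^ 2) / c ^ 2)

noncomputable def Bc (c : ℝ) (V : Fin 3 → ℝ) : Matrix (Fin 3) (Fin 3) ℝ :=
  1 + (gammaV c V ^ 2 / (c ^ 2 * (gammaV c V + 1))) • vecMulVec V V

theorem gammaV_pos {c : ℝ} (hc : 0 < c) {V : Fin 3 → ℝ} (hV : √(∑ i, V i ^ 2) < c) :
    0 < gammaV c V := by
  have h : ∑ i, V i ^ 2 < c ^ 2 := (Real.sqrt_lt' hc).1 hV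
  have h' : (∑ i, V i ^ 2) / c ^ 2 < 1 := (div_lt_one (by positivity)).2 h
  exact one_div_pos.2 (Real.sqrt_pos.2 (sub_pos.2 h'))

theorem gammaV_sq_mul {c : ℝ} (hc : 0 < c) {V : Fin 3 → ℝ} (hV : √(∑ i, V i ^ 2) < c) :
    gammaV c V ^ 2 * (c ^ 2 - V ⬝ᵥ V) = c ^ 2 := by
  have h : ∑ i, V i ^ 2 < c ^ 2 := (Real.sqrt_lt' hc).1 hV
  have h' : (∑ i, V i ^ 2) / c ^ 2 < 1 := (div_lt_one (by positivity)).2 h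
  have hVV : V ⬝ᵥ V = ∑ i, V i ^ 2 := by simp only [dotProduct, sq]
  have hne : c ^ 2 - ∑ i, V i ^ 2 ≠ 0 := (sub_pos.2 h).ne'
  rw [hVV, gammaV, div_pow, Real.sq_sqrt (sub_pos.2 h').le]
  field_simp

theorem Bc_mulVec (c : ℝ) (V w : Fin 3 → ℝ) :
    Bc c V *ᵥ w = w + (gammaV c V ^ 2 / (c ^ 2 * (gammaV c V + 1)) * (V ⬝ᵥ w)) • V := by
  simp [Bc, add_mulVec, smul_mulVec, vecMulVec_mulVec, mul_smul]

/-- The boost along `V` stretches every vector parallel to `V` by the Lorentz factor. -/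
theorem Bc_mulVec_of_parallel {c : ℝ} (hc : 0 < c) {V w : Fin 3 → ℝ}
    (hV : √(∑ i, V i ^ 2) < c) {a : ℝ} (ha : V = a • w) :
    Bc c V *ᵥ w = gammaV c V • w := by
  have hγ := gammaV_pos hc hV
  have hsq := gammaV_sq_mul hc hV
  have hVw : (V ⬝ᵥ w) • V = (V ⬝ᵥ V) • w := by
    rw [ha]
    simp only [dotProduct_smul, smul_dotProduct, smul_smul, smul_eq_mul]
    ring_nf
  have hcoef : gammaV c V ^ 2 / (c ^ 2 * (gammaV c V + 1)) * (V ⬝ᵥ V) = gammaV c V - 1 := by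
    field_simp
    linear_combination -hsq
  rw [Bc_mulVec, mul_smul, hVw, smul_smul, hcoef]
  module

theorem HasDerivAt.matrix_mulVec {m n : Type*} [Fintype m] [Fintype n] {f : ℝ → n → ℝ}
    {f' : n → ℝ} {s : ℝ} (hf : HasDerivAt f f' s) (M : Matrix m n ℝ) :
    HasDerivAt (fun r => M *ᵥ f r) (M *ᵥ f') s :=
  (LinearMap.toContinuousLinearMap M.mulVecLin).hasFDerivAt.comp_hasDerivAt s hf

theorem HasDerivAt.const_dotProduct {n : Type*} [Fintype n] {f : ℝ → n → ℝ}
    {f' : n → ℝ} {s : ℝ} (hf : HasDerivAt f f' s) (v : n → ℝ) :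
    HasDerivAt (fun r => v ⬝ᵥ f r) (v ⬝ᵥ f') s :=
  HasDerivAt.fun_sum fun i _ => (hasDerivAt_pi.1 hf i).const_mul (v i)

theorem stmt15 (c : ℝ) (hc : 0 < c) (V : Fin 3 → ℝ)
    (hV : Real.sqrt (∑ i, V i ^ 2) < c)
    (Q : Matrix (Fin 3) (Fin 3) ℝ) (hQ : Qᵀ * Q = 1) (hdetQ : Q.det = 1)
    (tstar : ℝ → ℝ) (ξstar : ℝ → (Fin 3 → ℝ))
    (htstar : Differentiable ℝ tstar) (hξstar : Differentiable ℝ ξstar)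
    (t : ℝ → ℝ) (ξ : ℝ → (Fin 3 → ℝ))
    (ht : ∀ s, t s = gammaV c V * tstar s
      + (gammaV c V / c ^ 2) * (V ⬝ᵥ Q.mulVec (ξstar s)))
    (hξ : ∀ s, ξ s = (gammaV c V * tstar s) • V + (Bc c V * Q).mulVec (ξstar s))
    (s : ℝ) (htd : deriv tstar s ≠ 0) (htd' : deriv t s ≠ 0)
    (ustar u : Fin 3 → ℝ)
    (hustar : ustar = (deriv tstar s)⁻¹ • deriv ξstar s)
    (hu : u = (deriv t s)⁻¹ • deriv ξ s)
    (hden : 0 < 1 + (V ⬝ᵥ Q.mulVec ustar) / c ^ 2) :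
    u = (1 + (V ⬝ᵥ Q.mulVec ustar) / c ^ 2)⁻¹ •
        (V + (gammaV c V)⁻¹ • (Bc c V * Q).mulVec ustar) ∧
    (Q = 1 → (∃ a : ℝ, V = a • ustar) →
      u = (1 + (V ⬝ᵥ ustar) / c ^ 2)⁻¹ • (V + ustar)) := by
  have hγ := gammaV_pos hc hV
  have hτ := (htstar s).hasDerivAt
  have hx := (hξstar s).hasDerivAt
  have hxu : deriv ξstar s = deriv tstar s • ustar := by
    rw [hustar, smul_inv_smul₀ htd]
  rw [hxu] at hx
  have hdt : deriv t s =
      gammaV c V * deriv tstar s * (1 + (V ⬝ᵥ Q.mulVec ustar) / c ^ 2) := by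
    rw [funext ht, ((hτ.const_mul _).fun_add
      (((hx.matrix_mulVec Q).const_dotProduct V).const_mul _)).deriv]
    simp only [mulVec_smul, dotProduct_smul, smul_eq_mul]
    ring
  have hdξ : deriv ξ s = (gammaV c V * deriv tstar s) •
      (V + (gammaV c V)⁻¹ • (Bc c V * Q).mulVec ustar) := by
    rw [funext hξ, (((hτ.const_mul (gammaV c V)).smul_const V).fun_add
      (hx.matrix_mulVec (Bc c V * Q))).deriv, mulVec_smul, smul_add, smul_smul,
      mul_right_comm, mul_inv_cancel₀ hγ.ne', one_mul]
  have hvel : u = (1 + (V ⬝ᵥ Q.mulVec ustar) / c ^ 2)⁻¹ •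
      (V + (gammaV c V)⁻¹ • (Bc c V * Q).mulVec ustar) := by
    rw [hu, hdt, hdξ, smul_smul]
    congr 1
    have := hden.ne'
    field_simp
  refine ⟨hvel, ?_⟩
  rintro rfl ⟨a, ha⟩
  rw [hvel, Matrix.mul_one, one_mulVec, Bc_mulVec_of_parallel hc hV ha,
    inv_smul_smul₀ hγ.ne']
end
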